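/- arXiv:1811.05776 — 2 statements merged into one kernel-verified Lean document; each statement's English description precedes it below -/
import Mathlib

section
/- Let n ≥ 2, 1 ≤ k ≤ n − 1, and let κ = (κ_1, …, κ_n) ∈ ℝ^n have all entries positive. If equality k·σ_k(κ)·σ_{n-1}(κ) = n·(n − k + 1)·σ_{k-1}(κ)·σ_n(κ) holds, then κ_1 = κ_2 = … = κ_n. -/
/-!
Write `k = m + 1` and `P S = ∏ i ∈ S, κ i`. Since `σ_{n-1} = σ_n · ∑ i, 1 / κ i`, the
hypothesis reads `k σ_k ∑ i, 1 / κ i = n (n - m) σ_m`. Splitting the left side over pairs `(S, i)`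
with `#S = k` according to whether `i ∈ S`, the pairs with `i ∈ S` contribute `k (n - m) σ_m`.
The pairs with `i ∉ S`, after choosing `j ∈ S` and putting `T = S \ {j}`, contribute
`∑_{#T = m} P T · ∑_{j ∉ T} ∑_{i ∉ T, i ≠ j} κ j / κ i`. Hence equality says that
`∑_{#T = m} P T · (∑_{i, j ∉ T} κ j / κ i - (n - m)²) = 0`.
Each bracket is nonnegative, because symmetrising turns it into
`½ ∑_{i, j ∉ T} (κ j - κ i)² / (κ j κ i)`; so all of them vanish. As `m ≤ n - 2`, every
pair `i, j` is avoided by some `T` of size `m`, and then `κ i = κ j`.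

All the reindexings are instances of `sum_powersetCard_succ`.
-/

/-- The `k`-th elementary symmetric polynomial of `κ = (κ_1, …, κ_n)`:
the sum of all products of `k` distinct entries, with `σ_0 = 1` and `σ_m = 0` for `m > n`. -/
noncomputable def esymm {n : ℕ} (κ : Fin n → ℝ) (k : ℕ) : ℝ :=
  ∑ s ∈ Finset.powersetCard k (Finset.univ : Finset (Fin n)), ∏ i ∈ s, κ i

open Finset in
/-- Pairs `(S, i)` with `#S = m + 1`, `i ∈ S` correspond to pairs `(T, i)` with `#T = m`, `i ∉ T`
through `T = S \ {i}`. -/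
lemma sum_powersetCard_succ {n : ℕ} (m : ℕ) (f : Finset (Fin n) → Fin n → ℝ) :
    ∑ S ∈ powersetCard (m + 1) univ, ∑ i ∈ S, f (S.erase i) i =
      ∑ T ∈ powersetCard m univ, ∑ i ∈ Tᶜ, f T i := by
  rw [Finset.sum_sigma', Finset.sum_sigma']
  refine Finset.sum_bij' (fun x _ => ⟨x.1.erase x.2, x.2⟩) (fun x _ => ⟨insert x.2 x.1, x.2⟩)
    ?_ ?_ ?_ ?_ ?_
  · rintro ⟨S, i⟩ h
    simp only [mem_sigma, mem_powersetCard_univ, mem_compl] at h ⊢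
    exact ⟨by rw [card_erase_of_mem h.2, h.1]; rfl, by simp⟩
  · rintro ⟨T, i⟩ h
    simp only [mem_sigma, mem_powersetCard_univ, mem_compl] at h ⊢
    exact ⟨by rw [card_insert_of_notMem h.2, h.1], by simp⟩
  · rintro ⟨S, i⟩ h
    simp only [mem_sigma] at h
    simp [insert_erase h.2]
  · rintro ⟨T, i⟩ h
    simp only [mem_sigma, mem_compl] at h
    simp [erase_insert h.2]
  · rintro ⟨S, i⟩ h
    rfl

open Finset in
/-- The pairs `(S, i)` with `i ∈ S` in the expansion of `σ_{m+1} · ∑ i, 1 / κ i`. -/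
lemma sum_inner_eq {n : ℕ} (κ : Fin n → ℝ) (hκ : ∀ i, 0 < κ i) (m : ℕ) (hm : m ≤ n) :
    ∑ S ∈ powersetCard (m + 1) univ, ∑ i ∈ S, (∏ l ∈ S, κ l) * (κ i)⁻¹ =
      ((n : ℝ) - m) * esymm κ m := by
  have h := sum_powersetCard_succ m (fun T _ => ∏ l ∈ T, κ l)
  have h1 : ∀ S ∈ powersetCard (m + 1) (univ : Finset (Fin n)),
      ∑ i ∈ S, (∏ l ∈ S, κ l) * (κ i)⁻¹ = ∑ i ∈ S, ∏ l ∈ S.erase i, κ l := by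
    intro S _
    refine sum_congr rfl fun i hi => ?_
    rw [← prod_erase_mul S κ hi, mul_inv_cancel_right₀ (hκ i).ne']
  rw [sum_congr rfl h1, h, esymm, mul_sum]
  refine sum_congr rfl fun T hT => ?_
  rw [mem_powersetCard_univ] at hT
  rw [sum_const, card_compl, hT, Fintype.card_fin, nsmul_eq_mul, Nat.cast_sub hm]

open Finset in
/-- The pairs `(S, i)` with `i ∉ S` in the expansion of `σ_{m+1} · ∑ i, 1 / κ i`, counted `m + 1`
times, once for each `j ∈ S`. The diagonal terms `i = j` are added and subtracted. -/
lemma sum_outer_eq {n : ℕ} (κ : Fin n → ℝ) (hκ : ∀ i, 0 < κ i) (m : ℕ) (hm : m ≤ n) :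
    ((m : ℝ) + 1) * ∑ S ∈ powersetCard (m + 1) univ, ∑ i ∈ Sᶜ, (∏ l ∈ S, κ l) * (κ i)⁻¹ =
      ∑ T ∈ powersetCard m univ,
        (∏ l ∈ T, κ l) * (∑ j ∈ Tᶜ, ∑ i ∈ Tᶜ, κ j * (κ i)⁻¹ - ((n : ℝ) - m)) := by
  have h := sum_powersetCard_succ m
    (fun T j => (∏ l ∈ T, κ l) * (κ j * ∑ i ∈ (insert j T)ᶜ, (κ i)⁻¹))
  have h1 : ∀ S ∈ powersetCard (m + 1) (univ : Finset (Fin n)),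
      ((m : ℝ) + 1) * ∑ i ∈ Sᶜ, (∏ l ∈ S, κ l) * (κ i)⁻¹ =
      ∑ j ∈ S, (∏ l ∈ S.erase j, κ l) *
        (κ j * ∑ i ∈ (insert j (S.erase j))ᶜ, (κ i)⁻¹) := by
    intro S hS
    rw [mem_powersetCard_univ] at hS
    have h2 : ∀ j ∈ S, (∏ l ∈ S.erase j, κ l) *
        (κ j * ∑ i ∈ (insert j (S.erase j))ᶜ, (κ i)⁻¹) = ∑ i ∈ Sᶜ, (∏ l ∈ S, κ l) * (κ i)⁻¹ := by
      intro j hj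
      rw [insert_erase hj, ← mul_assoc, prod_erase_mul S κ hj, mul_sum]
    rw [sum_congr rfl h2, sum_const, hS, nsmul_eq_mul]
    push_cast
    rfl
  rw [mul_sum, sum_congr rfl h1, h]
  refine sum_congr rfl fun T hT => ?_
  rw [mem_powersetCard_univ] at hT
  rw [← mul_sum]
  congr 1
  have h3 : ∀ j ∈ Tᶜ, κ j * ∑ i ∈ (insert j T)ᶜ, (κ i)⁻¹ =
      ∑ i ∈ Tᶜ, κ j * (κ i)⁻¹ - 1 := by
    intro j hj
    rw [compl_insert, ← mul_sum, ← add_sum_erase Tᶜ (fun i => (κ i)⁻¹) hj, mul_add,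
      mul_inv_cancel₀ (hκ j).ne']
    ring
  rw [sum_congr rfl h3, sum_sub_distrib, sum_const, card_compl, hT, Fintype.card_fin,
    nsmul_eq_mul, Nat.cast_sub hm, mul_one]

open Finset in
/-- Symmetrisation of `∑ κ j / κ i - (#A)²` into a sum of nonnegative terms. -/
lemma two_mul_sum_ratio {n : ℕ} (κ : Fin n → ℝ) (hκ : ∀ i, 0 < κ i) (A : Finset (Fin n)) :
    2 * (∑ j ∈ A, ∑ i ∈ A, κ j * (κ i)⁻¹ - (#A : ℝ) ^ 2) =
      ∑ j ∈ A, ∑ i ∈ A, (κ j - κ i) ^ 2 / (κ j * κ i) := by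
  have h : ∀ j ∈ A, ∑ i ∈ A, (κ j - κ i) ^ 2 / (κ j * κ i) =
      ∑ i ∈ A, κ j * (κ i)⁻¹ + ∑ i ∈ A, κ i * (κ j)⁻¹ - #A * 2 := by
    intro j _
    rw [← sum_add_distrib, ← nsmul_eq_mul, ← sum_const, ← sum_sub_distrib]
    refine sum_congr rfl fun i _ => ?_
    have := (hκ i).ne'
    have := (hκ j).ne'
    field_simp
    ring
  rw [sum_congr rfl h, sum_sub_distrib, sum_add_distrib,
    sum_comm (f := fun j i => κ i * (κ j)⁻¹), sum_const, nsmul_eq_mul]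
  ring

open Finset in
lemma esymm_card {n : ℕ} (κ : Fin n → ℝ) : esymm κ n = ∏ i, κ i := by
  have h : powersetCard n (univ : Finset (Fin n)) = {univ} := by
    simpa using powersetCard_self (univ : Finset (Fin n))
  rw [esymm, h, sum_singleton]

open Finset in
/-- `σ_{n-1} = σ_n · ∑ i, 1 / κ i`, the case of `sum_inner_eq` where `S` is everything. -/
lemma esymm_pred {n : ℕ} (hn : 1 ≤ n) (κ : Fin n → ℝ) (hκ : ∀ i, 0 < κ i) :
    esymm κ (n - 1) = esymm κ n * ∑ i, (κ i)⁻¹ := by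
  have h : powersetCard n (univ : Finset (Fin n)) = {univ} := by
    simpa using powersetCard_self (univ : Finset (Fin n))
  have h1 := sum_inner_eq κ hκ (n - 1) (Nat.sub_le _ _)
  rw [Nat.sub_add_cancel hn, h, sum_singleton, ← mul_sum, ← esymm_card, Nat.cast_sub hn] at h1
  rw [h1]
  push_cast
  ring

/-- Equality case of the Newton–Maclaurin inequality: for `n ≥ 2`, `1 ≤ k ≤ n - 1` and
`κ` with positive entries, if `k σ_k(κ) σ_{n-1}(κ) = n (n - k + 1) σ_{k-1}(κ) σ_n(κ)`,
then all entries of `κ` are equal. -/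
theorem newton_maclaurin_eq_case (n k : ℕ) (hn : 2 ≤ n) (hk : 1 ≤ k) (hkn : k ≤ n - 1)
    (κ : Fin n → ℝ) (hκ : ∀ i, 0 < κ i)
    (heq : (k : ℝ) * esymm κ k * esymm κ (n - 1) =
      (n : ℝ) * ((n : ℝ) - (k : ℝ) + 1) * esymm κ (k - 1) * esymm κ n) :
    ∀ i j, κ i = κ j := by
  obtain ⟨m, rfl⟩ : ∃ m, k = m + 1 := ⟨k - 1, by omega⟩
  have hm : m ≤ n := by omega
  have hσn : 0 < esymm κ n := by
    rw [esymm_card]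
    exact Finset.prod_pos fun i _ => hκ i
  rw [esymm_pred (by omega) κ hκ, Nat.add_sub_cancel] at heq
  push_cast at heq
  have heq' : ((m : ℝ) + 1) * (esymm κ (m + 1) * ∑ i, (κ i)⁻¹) =
      n * ((n : ℝ) - m) * esymm κ m := by
    refine mul_right_cancel₀ hσn.ne' ?_
    linear_combination heq
  have hsplit : esymm κ (m + 1) * ∑ i, (κ i)⁻¹ =
      ∑ S ∈ Finset.powersetCard (m + 1) Finset.univ, ∑ i ∈ S, (∏ l ∈ S, κ l) * (κ i)⁻¹ +
      ∑ S ∈ Finset.powersetCard (m + 1) Finset.univ, ∑ i ∈ Sᶜ, (∏ l ∈ S, κ l) * (κ i)⁻¹ := by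
    rw [esymm, Finset.sum_mul, ← Finset.sum_add_distrib]
    refine Finset.sum_congr rfl fun S _ => ?_
    rw [Finset.sum_add_sum_compl, Finset.mul_sum]
  rw [hsplit, mul_add, sum_outer_eq κ hκ m hm, sum_inner_eq κ hκ m hm] at heq'
  have hnonneg : ∀ A : Finset (Fin n), ∀ j ∈ A, ∀ i ∈ A,
      0 ≤ (κ j - κ i) ^ 2 / (κ j * κ i) := fun A j _ i _ =>
    div_nonneg (sq_nonneg _) (mul_pos (hκ j) (hκ i)).le
  have hzero : ∑ T ∈ Finset.powersetCard m (Finset.univ : Finset (Fin n)),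
      (∏ l ∈ T, κ l) * ∑ j ∈ Tᶜ, ∑ i ∈ Tᶜ, (κ j - κ i) ^ 2 / (κ j * κ i) = 0 := by
    have h1 : ∀ T ∈ Finset.powersetCard m (Finset.univ : Finset (Fin n)),
        (∏ l ∈ T, κ l) * ∑ j ∈ Tᶜ, ∑ i ∈ Tᶜ, (κ j - κ i) ^ 2 / (κ j * κ i) =
        2 * ((∏ l ∈ T, κ l) * (∑ j ∈ Tᶜ, ∑ i ∈ Tᶜ, κ j * (κ i)⁻¹ - ((n : ℝ) - m))) -
        2 * ((n : ℝ) - m) * ((n : ℝ) - m - 1) * ∏ l ∈ T, κ l := by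
      intro T hT
      rw [Finset.mem_powersetCard_univ] at hT
      rw [← two_mul_sum_ratio κ hκ, Finset.card_compl, hT, Fintype.card_fin, Nat.cast_sub hm]
      ring
    rw [Finset.sum_congr rfl h1, Finset.sum_sub_distrib, ← Finset.mul_sum, ← Finset.mul_sum]
    change _ - _ * esymm κ m = 0
    linear_combination 2 * heq'
  intro i j
  -- a set of size `m ≤ n - 2` avoiding both `i` and `j`
  obtain ⟨T, hTs, hTc⟩ : ∃ T ⊆ ({i, j} : Finset (Fin n))ᶜ, T.card = m := by
    refine Finset.exists_subset_card_eq ?_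
    have := Finset.card_le_two (a := i) (b := j)
    rw [Finset.card_compl, Fintype.card_fin]
    omega
  have hiT : i ∈ Tᶜ := Finset.mem_compl.2 fun h => by simpa using hTs h
  have hjT : j ∈ Tᶜ := Finset.mem_compl.2 fun h => by simpa using hTs h
  have hprod : 0 < ∏ l ∈ T, κ l := Finset.prod_pos fun l _ => hκ l
  have hT0 := (Finset.sum_eq_zero_iff_of_nonneg fun T _ =>
    mul_nonneg (Finset.prod_nonneg fun l _ => (hκ l).le)
      (Finset.sum_nonneg fun j hj => Finset.sum_nonneg fun i hi => hnonneg _ j hj i hi)).1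
    hzero T (Finset.mem_powersetCard_univ.2 hTc)
  have hS0 := (mul_eq_zero.1 hT0).resolve_left hprod.ne'
  have hj0 := (Finset.sum_eq_zero_iff_of_nonneg fun j hj =>
    Finset.sum_nonneg fun i hi => hnonneg _ j hj i hi).1 hS0 i hiT
  have hi0 := (Finset.sum_eq_zero_iff_of_nonneg fun l hl => hnonneg _ i hiT l hl).1 hj0 j hjT
  have hsq := (div_eq_zero_iff.1 hi0).resolve_right (mul_pos (hκ i) (hκ j)).ne'
  exact sub_eq_zero.1 (pow_eq_zero_iff two_ne_zero |>.1 hsq)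
end

section
/- Let n ≥ 1, let e ∈ ℝ^{n+1} be a unit vector and R > 0. A point x ∈ ℝ^{n+1} belongs to the spherical cap C_R(e) if and only if |x|² + 1 = 2·√(R²+1)·⟨x,e⟩; and for every x ∈ C_R(e), with outward unit normal ν = (x − √(R²+1)·e)/R, one has ⟨X_e(x), ν⟩ = R·⟨x,e⟩. In particular ⟨x,e⟩·R − ⟨X_e(x), ν⟩ = 0, i.e. the spherical caps C_R(e) are static solutions of the flow with speed f = ⟨x,e⟩/F − ⟨X_e, ν⟩ when F = 1/R (the normalized curvature of C_R(e)). -/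
/-! With `s = √(R²+1)`, `a = ⟪x, e⟫` and `|e| = 1`, squaring the equation of the cap gives
`|x|² + 1 = 2sa`. On the cap, then,
`⟪X_e, x - s e⟫ = a (|x|² - sa) - ½ (|x|² + 1)(a - s) = a (sa - 1) - sa (a - s) = a (s² - 1) = a R²`,
and dividing by `R` gives `⟪X_e, ν⟫ = R a`. -/

open scoped RealInnerProductSpace

/-- The conformal Killing field `X_e(x) = ⟨x,e⟩ x - ½(|x|² + 1) e` on `ℝ^{n+1}`. -/
noncomputable def confKilling {n : ℕ} (e : EuclideanSpace ℝ (Fin (n + 1))) :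
    EuclideanSpace ℝ (Fin (n + 1)) → EuclideanSpace ℝ (Fin (n + 1)) :=
  fun x => ⟪x, e⟫ • x - ((1 / 2) * (‖x‖ ^ 2 + 1)) • e

/-- Membership in the spherical cap `C_R(e) = {x : |x - √(R²+1) e| = R}`. -/
noncomputable def memCap {n : ℕ} (e : EuclideanSpace ℝ (Fin (n + 1))) (R : ℝ)
    (x : EuclideanSpace ℝ (Fin (n + 1))) : Prop :=
  ‖x - Real.sqrt (R ^ 2 + 1) • e‖ = R

/-- The defining equation of the cap, squared and expanded; the constant `s² - R² = 1` appears. -/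
theorem memCap_iff_aux {n : ℕ} {e : EuclideanSpace ℝ (Fin (n + 1))} (he : ‖e‖ = 1) {R : ℝ}
    (hR : 0 < R) (x : EuclideanSpace ℝ (Fin (n + 1))) :
    memCap e R x ↔ ‖x‖ ^ 2 + 1 = 2 * Real.sqrt (R ^ 2 + 1) * ⟪x, e⟫ := by
  have hs : Real.sqrt (R ^ 2 + 1) ^ 2 = R ^ 2 + 1 := Real.sq_sqrt (by positivity)
  have hexp : ‖x - Real.sqrt (R ^ 2 + 1) • e‖ ^ 2
      = ‖x‖ ^ 2 - 2 * (Real.sqrt (R ^ 2 + 1) * ⟪x, e⟫) + (R ^ 2 + 1) := by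
    rw [norm_sub_sq_real, real_inner_smul_right, norm_smul, he, mul_one, Real.norm_eq_abs,
      sq_abs, hs]
  unfold memCap
  rw [← sq_eq_sq₀ (norm_nonneg _) hR.le, hexp]
  constructor <;> intro h <;> linarith

/-- `x ∈ C_R(e)` iff `|x|² + 1 = 2 √(R²+1) ⟨x,e⟩`; and for `x ∈ C_R(e)`, with outward unit
normal `ν = (x - √(R²+1) e)/R`, one has `⟨X_e(x), ν⟩ = R ⟨x,e⟩`, hence
`⟨x,e⟩ R - ⟨X_e(x), ν⟩ = 0`: the caps `C_R(e)` are static solutions of the flow. -/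
theorem cap_static (n : ℕ) (hn : 1 ≤ n)
    (e : EuclideanSpace ℝ (Fin (n + 1))) (he : ‖e‖ = 1) (R : ℝ) (hR : 0 < R) :
    (∀ x : EuclideanSpace ℝ (Fin (n + 1)),
      memCap e R x ↔ ‖x‖ ^ 2 + 1 = 2 * Real.sqrt (R ^ 2 + 1) * ⟪x, e⟫) ∧
    (∀ x : EuclideanSpace ℝ (Fin (n + 1)), memCap e R x →
      ⟪confKilling e x, R⁻¹ • (x - Real.sqrt (R ^ 2 + 1) • e)⟫ = R * ⟪x, e⟫ ∧
      ⟪x, e⟫ * R - ⟪confKilling e x, R⁻¹ • (x - Real.sqrt (R ^ 2 + 1) • e)⟫ = 0) := by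
  refine ⟨memCap_iff_aux he hR, fun x hx => ?_⟩
  have hs : Real.sqrt (R ^ 2 + 1) ^ 2 = R ^ 2 + 1 := Real.sq_sqrt (by positivity)
  have hN := (memCap_iff_aux he hR x).1 hx
  have key : ⟪confKilling e x, R⁻¹ • (x - Real.sqrt (R ^ 2 + 1) • e)⟫ = R * ⟪x, e⟫ := by
    have hN' : ‖x‖ ^ 2 = 2 * Real.sqrt (R ^ 2 + 1) * ⟪x, e⟫ - 1 := by linarith
    simp only [confKilling, inner_sub_left, inner_sub_right, real_inner_smul_left,
      real_inner_smul_right, real_inner_self_eq_norm_sq, he, real_inner_comm x e, hN']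
    field_simp
    -- After substituting for `‖x‖²`, only `√(R²+1)² = R² + 1` remains to be used.
    linear_combination (2 * ⟪x, e⟫) * hs
  exact ⟨key, by rw [key]; ring⟩
end
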